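/- Suppose that in degree k the spaces H^k_∂̄, H^k_BC, D^k, E^k, F^k are finite-dimensional. Then dim H^k_BC + dim E^k = dim H^k_∂̄ + dim D^k + dim F^k. -/

import Mathlib

open Submodule LinearMap Module

section Setup

variable (U : ℤ → Type*) [∀ k, AddCommGroup (U k)] [∀ k, Module ℂ (U k)]

/-- The identification `U a → U b` induced by an equality `a = b` of degrees. -/
def castU {a b : ℤ} (h : a = b) : U a →ₗ[ℂ] U b := by subst h; exact LinearMap.id

variable (D : ∀ k : ℤ, U k →ₗ[ℂ] U (k + 1)) (Db : ∀ k : ℤ, U k →ₗ[ℂ] U (k - 1))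

/-- The composite `∂∂̄ : U^k → U^{k-1} → U^k`. -/
def ddbar (k : ℤ) : U k →ₗ[ℂ] U k :=
  (castU U (show k - 1 + 1 = k by ring)).comp ((D (k - 1)).comp (Db k))

/-- `ker ∂ ∩ U^k` -/
def kerD (k : ℤ) : Submodule ℂ (U k) := LinearMap.ker (D k)

/-- `ker ∂̄ ∩ U^k` -/
def kerDb (k : ℤ) : Submodule ℂ (U k) := LinearMap.ker (Db k)

/-- `∂(U^{k-1})` -/
def imD (k : ℤ) : Submodule ℂ (U k) :=
  LinearMap.range ((castU U (show k - 1 + 1 = k by ring)).comp (D (k - 1)))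

/-- `∂̄(U^{k+1})` -/
def imDb (k : ℤ) : Submodule ℂ (U k) :=
  LinearMap.range ((castU U (show k + 1 - 1 = k by ring)).comp (Db (k + 1)))

/-- `ker (∂∂̄) ∩ U^k` -/
def kerDDbar (k : ℤ) : Submodule ℂ (U k) := LinearMap.ker (ddbar U D Db k)

/-- `(∂∂̄)(U^k)` -/
def imDDbar (k : ℤ) : Submodule ℂ (U k) := LinearMap.range (ddbar U D Db k)

end Setup

/-- The quotient of a submodule `p` by (the preimage in `p` of) a submodule `q`. -/
abbrev SubQuot {V : Type*} [AddCommGroup V] [Module ℂ V] (p q : Submodule ℂ V) :=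
  ↥p ⧸ q.comap p.subtype

/-- The map `p/q → p'/q'` induced by the identity (inclusion) on representatives. -/
def qmap {V : Type*} [AddCommGroup V] [Module ℂ V] {p p' q q' : Submodule ℂ V}
    (hp : p ≤ p') (hq : q ≤ q') : SubQuot p q →ₗ[ℂ] SubQuot p' q' :=
  Submodule.mapQ _ _ (Submodule.inclusion hp) fun x hx => by
    simp only [Submodule.mem_comap, Submodule.subtype_apply, Submodule.coe_inclusion] at hx ⊢
    exact hq hx

section Cohomology

variable (U : ℤ → Type*) [∀ k, AddCommGroup (U k)] [∀ k, Module ℂ (U k)]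
variable (D : ∀ k : ℤ, U k →ₗ[ℂ] U (k + 1)) (Db : ∀ k : ℤ, U k →ₗ[ℂ] U (k - 1))

/-- `H^k_∂ = (ker ∂ ∩ U^k)/∂(U^{k-1})` -/
abbrev Hd (k : ℤ) := SubQuot (kerD U D k) (imD U D k)

/-- `H^k_∂̄ = (ker ∂̄ ∩ U^k)/∂̄(U^{k+1})` -/
abbrev Hdb (k : ℤ) := SubQuot (kerDb U Db k) (imDb U Db k)

/-- `H^k_BC = (ker ∂ ∩ ker ∂̄ ∩ U^k)/(∂∂̄)(U^k)` -/
abbrev HBC (k : ℤ) := SubQuot (kerD U D k ⊓ kerDb U Db k) (imDDbar U D Db k)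

/-- `H^k_A = (ker (∂∂̄) ∩ U^k)/(∂(U^{k-1}) + ∂̄(U^{k+1}))` -/
abbrev HA (k : ℤ) := SubQuot (kerDDbar U D Db k) (imD U D k ⊔ imDb U Db k)

/-- `A^k = (∂(U^{k-1}) ∩ ∂̄(U^{k+1}))/(∂∂̄)(U^k)` -/
abbrev Avar (k : ℤ) := SubQuot (imD U D k ⊓ imDb U Db k) (imDDbar U D Db k)

/-- `B^k = (ker ∂̄ ∩ ∂(U^{k-1}))/(∂∂̄)(U^k)` -/
abbrev Bvar (k : ℤ) := SubQuot (kerDb U Db k ⊓ imD U D k) (imDDbar U D Db k)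

/-- `C^k = (ker (∂∂̄) ∩ U^k)/((ker ∂̄ ∩ U^k) + ∂(U^{k-1}))` -/
abbrev Cvar (k : ℤ) := SubQuot (kerDDbar U D Db k) (kerDb U Db k ⊔ imD U D k)

/-- `D^k = (ker ∂ ∩ ∂̄(U^{k+1}))/(∂∂̄)(U^k)` -/
abbrev Dvar (k : ℤ) := SubQuot (kerD U D k ⊓ imDb U Db k) (imDDbar U D Db k)

/-- `E^k = (ker (∂∂̄) ∩ U^k)/((ker ∂ ∩ U^k) + ∂̄(U^{k+1}))` -/
abbrev Evar (k : ℤ) := SubQuot (kerDDbar U D Db k) (kerD U D k ⊔ imDb U Db k)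

/-- `F^k = (ker (∂∂̄) ∩ U^k)/((ker ∂ ∩ U^k) + (ker ∂̄ ∩ U^k))` -/
abbrev Fvar (k : ℤ) := SubQuot (kerDDbar U D Db k) (kerD U D k ⊔ kerDb U Db k)

end Cohomology

/-! The quotient `H_∂̄ = ker ∂̄ / im ∂̄` splits along `ker ∂`: its dimension is that of
`(ker ∂ ∩ ker ∂̄) / (ker ∂ ∩ im ∂̄)` plus that of `(ker ∂ + ker ∂̄) / (ker ∂ + im ∂̄)`, by the
modular law. Adding `dim D` to the first summand gives `dim H_BC`, by the chain
`im ∂∂̄ ≤ ker ∂ ∩ im ∂̄ ≤ ker ∂ ∩ ker ∂̄`, and adding `dim F` to the second gives `dim E`, by the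
chain `ker ∂ + im ∂̄ ≤ ker ∂ + ker ∂̄ ≤ ker ∂∂̄`. Only additivity of dimension is used, and this
holds for cardinal ranks. -/

section SubquotientRank

universe u

variable {R : Type*} {V : Type u} [Ring R] [AddCommGroup V] [Module R V]

/-- The rank of the subquotient `p / (p ⊓ q)`, the linear analogue of `Subgroup.relIndex`.
As there, `q ≤ p` is not part of the definition, so that it need not be carried along. -/
noncomputable def subquotientRank (p q : Submodule R V) : Cardinal :=
  Module.rank R (p ⧸ q.comap p.subtype)

theorem subquotientRank_inf_left (p q : Submodule R V) :
    subquotientRank p (p ⊓ q) = subquotientRank p q :=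
  (quotEquivOfEq _ _ (by rw [comap_inf, comap_subtype_self, top_inf_eq])).rank_eq

theorem subquotientRank_sup_left (p q : Submodule R V) :
    subquotientRank (p ⊔ q) q = subquotientRank p q := by
  rw [← subquotientRank_inf_left p q]
  exact (quotientInfEquivSupQuotient p q).rank_eq.symm

theorem rank_map_mkQ_comap_subtype {p r : Submodule R V} (hrp : r ≤ p) (q : Submodule R V) :
    Module.rank R ((r.comap p.subtype).map (q.comap p.subtype).mkQ) = subquotientRank r q := by
  let f : r →ₗ[R] p ⧸ q.comap p.subtype := (q.comap p.subtype).mkQ ∘ₗ inclusion hrp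
  have range_f : range f = (r.comap p.subtype).map (q.comap p.subtype).mkQ := by
    rw [range_comp, range_inclusion]
  have ker_f : ker f = q.comap r.subtype := by
    rw [ker_comp, ker_mkQ, ← comap_comp, subtype_comp_inclusion]
  rw [subquotientRank, ← range_f, ← ker_f]
  exact f.quotKerEquivRange.rank_eq.symm

variable [HasRankNullity.{u} R]

theorem subquotientRank_add_subquotientRank {p r q : Submodule R V} (hqr : q ≤ r) (hrp : r ≤ p) :
    subquotientRank p r + subquotientRank r q = subquotientRank p q := by
  have third_iso := (quotientQuotientEquivQuotient (q.comap p.subtype) (r.comap p.subtype)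
    (comap_mono hqr)).rank_eq
  rw [← rank_map_mkQ_comap_subtype hrp q, subquotientRank, ← third_iso]
  exact rank_quotient_add_rank _

theorem subquotientRank_sup_sup_add_subquotientRank_inf_inf {L I : Submodule R V} (hIL : I ≤ L)
    (K : Submodule R V) :
    subquotientRank (K ⊔ L) (K ⊔ I) + subquotientRank (K ⊓ L) (K ⊓ I) = subquotientRank L I := by
  have modular_law : L ⊓ (K ⊔ I) = (K ⊓ L) ⊔ I := by
    rw [inf_comm, sup_comm, sup_inf_assoc_of_le K hIL, sup_comm]
  have sup_part : subquotientRank (K ⊔ L) (K ⊔ I) = subquotientRank L ((K ⊓ L) ⊔ I) := by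
    rw [← modular_law, subquotientRank_inf_left, ← subquotientRank_sup_left L, sup_left_comm,
      sup_eq_left.2 hIL]
  have inf_part : subquotientRank (K ⊓ L) (K ⊓ I) = subquotientRank ((K ⊓ L) ⊔ I) I := by
    rw [subquotientRank_sup_left, ← subquotientRank_inf_left (K ⊓ L) I, inf_assoc,
      inf_eq_right.2 hIL]
  rw [sup_part, inf_part]
  exact subquotientRank_add_subquotientRank le_sup_right (sup_le inf_le_right hIL)

theorem subquotientRank_inf_add_subquotientRank_sup {K L N I J : Submodule R V}
    (hJ : J ≤ K ⊓ I) (hIL : I ≤ L) (hN : K ⊔ L ≤ N) :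
    subquotientRank (K ⊓ L) J + subquotientRank N (K ⊔ I) =
      subquotientRank L I + subquotientRank (K ⊓ I) J + subquotientRank N (K ⊔ L) := by
  rw [← subquotientRank_add_subquotientRank hJ (inf_le_inf_left K hIL),
    ← subquotientRank_add_subquotientRank (sup_le_sup_left hIL K) hN,
    ← subquotientRank_sup_sup_add_subquotientRank_inf_inf hIL K]
  ac_rfl

end SubquotientRank

section BidifferentialComplex

variable {U : ℤ → Type*} [∀ k, AddCommGroup (U k)] [∀ k, Module ℂ (U k)]
variable {D : ∀ k : ℤ, U k →ₗ[ℂ] U (k + 1)} {Db : ∀ k : ℤ, U k →ₗ[ℂ] U (k - 1)}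

theorem castU_mem_kerD {m k : ℤ} (hD2 : (D (m + 1)).comp (D m) = 0) (h : m + 1 = k) (x : U m) :
    castU U h (D m x) ∈ kerD U D k := by
  subst h
  exact LinearMap.congr_fun hD2 x

theorem castU_mem_kerDb {m k : ℤ} (hDb2 : (Db (m - 1)).comp (Db m) = 0) (h : m - 1 = k)
    (x : U m) : castU U h (Db m x) ∈ kerDb U Db k := by
  subst h
  exact LinearMap.congr_fun hDb2 x

theorem imDb_le_kerDb {k : ℤ} (hDb2 : (Db (k + 1 - 1)).comp (Db (k + 1)) = 0) :
    imDb U Db k ≤ kerDb U Db k := by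
  rintro _ ⟨x, rfl⟩
  exact castU_mem_kerDb hDb2 _ x

theorem imDDbar_le_kerD {k : ℤ} (hD2 : (D (k - 1 + 1)).comp (D (k - 1)) = 0) :
    imDDbar U D Db k ≤ kerD U D k := by
  rintro _ ⟨x, rfl⟩
  exact castU_mem_kerD hD2 _ (Db k x)

theorem kerDb_le_kerDDbar (k : ℤ) : kerDb U Db k ≤ kerDDbar U D Db k :=
  (ker_le_ker_comp (Db k) (D (k - 1))).trans (ker_le_ker_comp _ _)

theorem imDDbar_le_imDb {k : ℤ}
    (hanti : ddbar U D Db k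
      + (castU U (show k + 1 - 1 = k by ring)).comp ((Db (k + 1)).comp (D k)) = 0) :
    imDDbar U D Db k ≤ imDb U Db k := by
  rw [imDDbar, eq_neg_of_add_eq_zero_left hanti, range_neg]
  exact range_comp_le_range (D k) ((castU U _).comp (Db (k + 1)))

theorem kerD_le_kerDDbar {k : ℤ}
    (hanti : ddbar U D Db k
      + (castU U (show k + 1 - 1 = k by ring)).comp ((Db (k + 1)).comp (D k)) = 0) :
    kerD U D k ≤ kerDDbar U D Db k := by
  rw [kerDDbar, eq_neg_of_add_eq_zero_left hanti, ker_neg]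
  exact ker_le_ker_comp (D k) ((castU U _).comp (Db (k + 1)))

end BidifferentialComplex

theorem varouchas_dim_identity_two_general
    (U : ℤ → Type*) [∀ k, AddCommGroup (U k)] [∀ k, Module ℂ (U k)]
    (D : ∀ k : ℤ, U k →ₗ[ℂ] U (k + 1)) (Db : ∀ k : ℤ, U k →ₗ[ℂ] U (k - 1))
    (hD2 : ∀ k : ℤ, (D (k + 1)).comp (D k) = 0)
    (hDb2 : ∀ k : ℤ, (Db (k - 1)).comp (Db k) = 0)
    (hanti : ∀ k : ℤ, ddbar U D Db k
      + (castU U (show k + 1 - 1 = k by ring)).comp ((Db (k + 1)).comp (D k)) = 0)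
    (k : ℤ) :
    Module.rank ℂ (HBC U D Db k) + Module.rank ℂ (Evar U D Db k)
      = Module.rank ℂ (Hdb U Db k) + Module.rank ℂ (Dvar U D Db k)
        + Module.rank ℂ (Fvar U D Db k) :=
  subquotientRank_inf_add_subquotientRank_sup
    (le_inf (imDDbar_le_kerD (hD2 (k - 1))) (imDDbar_le_imDb (hanti k)))
    (imDb_le_kerDb (hDb2 (k + 1)))
    (sup_le (kerD_le_kerDDbar (hanti k)) (kerDb_le_kerDDbar k))

/-- the Varouchas dimension identity
`dim H^k_BC + dim E^k = dim H^k_∂̄ + dim D^k + dim F^k`. -/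
theorem varouchas_dim_identity_two
    (n : ℕ) (U : ℤ → Type*) [∀ k, AddCommGroup (U k)] [∀ k, Module ℂ (U k)]
    (hvan : ∀ k : ℤ, (n : ℤ) < |k| → ∀ x : U k, x = 0)
    (D : ∀ k : ℤ, U k →ₗ[ℂ] U (k + 1)) (Db : ∀ k : ℤ, U k →ₗ[ℂ] U (k - 1))
    (hD2 : ∀ k : ℤ, (D (k + 1)).comp (D k) = 0)
    (hDb2 : ∀ k : ℤ, (Db (k - 1)).comp (Db k) = 0)
    (hanti : ∀ k : ℤ, ddbar U D Db k
      + (castU U (show k + 1 - 1 = k by ring)).comp ((Db (k + 1)).comp (D k)) = 0)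
    (k : ℤ)
    (h1 : FiniteDimensional ℂ (Hdb U Db k))
    (h2 : FiniteDimensional ℂ (HBC U D Db k))
    (h3 : FiniteDimensional ℂ (Dvar U D Db k))
    (h4 : FiniteDimensional ℂ (Evar U D Db k))
    (h5 : FiniteDimensional ℂ (Fvar U D Db k)) :
    finrank ℂ (HBC U D Db k) + finrank ℂ (Evar U D Db k)
      = finrank ℂ (Hdb U Db k) + finrank ℂ (Dvar U D Db k) + finrank ℂ (Fvar U D Db k) := by
  have rank_identity := varouchas_dim_identity_two_general U D Db hD2 hDb2 hanti k
  simp only [← finrank_eq_rank] at rank_identity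
  exact_mod_cast rank_identity
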